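/- In the twin prime power construction, for all nonzero β, β' ∈ K with β + β' ≠ 0, one has N_β · N_{β'} = q·N_{ββ'/(β+β')} + 2·(I_{q+2} ⊗ J_{q²}) + (q−1)·J_{(q+2)q²}. -/

import Mathlib

/-!
The function `lineIndex x` labels the lines of the parallel class `x` of the affine plane `F × F`,
and `auxC x` is the indicator of lying on a common line of that class. Lines have `q` points and
lines of distinct classes meet in one point, so `C_x C_x = q C_x` and `C_x C_y = J` for `x ≠ y`.

Expand `N_β N_β'` by the mixed-product rule. The permutation matrix `P_{β,γ}` is the translation by
`γ / β`, so `P_{β,γ} P_{β',γ} = P_{β'',γ}` with `β'' = ββ' / (β + β')`, and the diagonal terms sum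
to `q N_β''`. The other terms all have right factor `J`, and their left factors sum to
`(J - I)² - (J - I) = J² - 3 J + 2 I`, because `∑_γ P_{β,γ} = J - I` for every `β ≠ 0`.
-/

open Matrix Kronecker BigOperators

noncomputable section

/-- The all-ones matrix. -/
def allOnes (n : Type*) : Matrix n n ℝ := Matrix.of fun _ _ => 1

/-- The auxiliary matrices `C_a` for `a ∈ F ∪ {y}` (formally `Option F`, with `none`
playing the role of the extra symbol `y`, so that `C_y = I_q ⊗ J_q`). -/
def auxC {F : Type*} [Field F] [Fintype F] [DecidableEq F] :
    Option F → Matrix (F × F) (F × F) ℝ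
  | some α => Matrix.of fun p r => if r.2 - p.2 = α * (r.1 - p.1) then 1 else 0
  | none => Matrix.of fun p r => if p.1 = r.1 then 1 else 0

/-- The permutation matrix `P_{β,γ}` with `(a,b)`-entry `1` iff `β·(−a+b) = γ`. -/
def permP {K : Type*} [Field K] [DecidableEq K] (β γ : K) : Matrix K K ℝ :=
  Matrix.of fun a b => if β * (-a + b) = γ then 1 else 0

/-- The matrix `N_β = Σ_{γ∈K∖{0}} P_{β,γ} ⊗ C_{ψ(γ)}` of the twin prime power
construction, where `ψ : K∖{0} → F ∪ {y}` is a fixed bijection. -/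
def NN {F K : Type*} [Field F] [Fintype F] [DecidableEq F]
    [Field K] [Fintype K] [DecidableEq K]
    (ψ : {x : K // x ≠ 0} ≃ Option F) (β : K) :
    Matrix (K × (F × F)) (K × (F × F)) ℝ :=
  ∑ γ : {x : K // x ≠ 0}, permP β (γ : K) ⊗ₖ auxC (ψ γ)

open scoped Finset

section AffinePlane

variable {F : Type*} [Field F]

/-- The index of the line through a point of the affine plane `F × F` in a given parallel class:
the class `some α` consists of the lines of slope `α`, indexed by their intercepts, and `none` is
the class of the vertical lines, indexed by their abscissae. -/
def lineIndex : Option F → F × F → F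
  | some α, p => p.2 - α * p.1
  | none, p => p.1

lemma lineIndex_prod_injective {x y : Option F} (hxy : x ≠ y) :
    Function.Injective fun p : F × F => (lineIndex x p, lineIndex y p) := by
  rintro ⟨a, u⟩ ⟨b, v⟩ h
  obtain ⟨hx, hy⟩ := Prod.mk.inj h
  cases x with
  | none => cases y <;> simp_all [lineIndex]
  | some α =>
    cases y with
    | none => simp_all [lineIndex]
    | some δ =>
      simp only [lineIndex] at hx hy
      have hne : α - δ ≠ 0 := sub_ne_zero.mpr fun hαδ => hxy (congrArg some hαδ)
      have hab : a = b := mul_left_cancel₀ hne (by linear_combination hy - hx)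
      subst hab
      exact Prod.ext rfl (sub_left_injective hx)

lemma existsUnique_lineIndex_eq [Finite F] {x y : Option F} (hxy : x ≠ y) (s t : F) :
    ∃! p : F × F, lineIndex x p = s ∧ lineIndex y p = t := by
  have hbij := Finite.injective_iff_bijective.mp (lineIndex_prod_injective hxy)
  simpa only [Prod.mk.injEq] using hbij.existsUnique (s, t)

variable [Fintype F] [DecidableEq F]

lemma card_lineIndex_eq_and_lineIndex_eq {x y : Option F} (hxy : x ≠ y) (s t : F) :
    #{p : F × F | lineIndex x p = s ∧ lineIndex y p = t} = 1 :=
  (Fintype.existsUnique_iff_card_one _).mp (existsUnique_lineIndex_eq hxy s t)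

lemma card_lineIndex_eq (x : Option F) (s : F) :
    #{p : F × F | lineIndex x p = s} = Fintype.card F := by
  obtain ⟨y, hyx⟩ := exists_ne x
  calc #{p : F × F | lineIndex x p = s}
      = ∑ t : F, #{p : F × F | lineIndex x p = s ∧ lineIndex y p = t} := by
        rw [Finset.card_eq_sum_card_fiberwise fun p _ => Finset.mem_univ (lineIndex y p)]
        simp only [Finset.filter_filter]
    _ = Fintype.card F := by simp [card_lineIndex_eq_and_lineIndex_eq hyx.symm]

lemma auxC_apply (x : Option F) (p r : F × F) :
    auxC x p r = if lineIndex x p = lineIndex x r then 1 else 0 := by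
  cases x with
  | none => rfl
  | some α =>
    refine if_congr ?_ rfl rfl
    simp only [lineIndex]
    constructor <;> intro h <;> linear_combination -h

lemma auxC_mul_auxC_apply (x y : Option F) (p r : F × F) :
    (auxC x * auxC y) p r =
      #{w : F × F | lineIndex x w = lineIndex x p ∧ lineIndex y w = lineIndex y r} := by
  simp only [Matrix.mul_apply, auxC_apply, mul_boole, ← ite_and, Finset.sum_boole, and_comm,
    eq_comm (a := lineIndex x p)]

lemma auxC_mul_self (x : Option F) : auxC x * auxC x = (Fintype.card F : ℝ) • auxC x := by
  ext p r
  rw [auxC_mul_auxC_apply, Matrix.smul_apply, auxC_apply]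
  split_ifs with h
  · simp [h, card_lineIndex_eq]
  · have hdisjoint (w : F × F) : ¬(lineIndex x w = lineIndex x p ∧ lineIndex x w = lineIndex x r) :=
      fun hw => h (hw.1.symm.trans hw.2)
    simp [hdisjoint]

lemma auxC_mul_auxC_of_ne {x y : Option F} (hxy : x ≠ y) :
    auxC x * auxC y = allOnes (F × F) := by
  ext p r
  rw [auxC_mul_auxC_apply, card_lineIndex_eq_and_lineIndex_eq hxy]
  simp [allOnes]

end AffinePlane

section AllOnes

variable (m n : Type*)

lemma allOnes_mul_allOnes [Fintype n] :
    allOnes n * allOnes n = (Fintype.card n : ℝ) • allOnes n := by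
  ext
  simp [allOnes, Matrix.mul_apply]

lemma allOnes_kronecker_allOnes : allOnes m ⊗ₖ allOnes n = allOnes (m × n) := by
  ext
  simp [allOnes]

end AllOnes

lemma sum_mul_sum_eq_sum_mul_add_sum_offDiag {ι A : Type*} [Fintype ι]
    [NonUnitalNonAssocSemiring A] (f g : ι → A) :
    (∑ i, f i) * ∑ i, g i =
      ∑ i, f i * g i + ∑ p ∈ (Finset.univ : Finset ι).offDiag, f p.1 * g p.2 := by
  classical
  rw [Finset.sum_mul_sum, ← Finset.sum_product', ← Finset.diag_union_offDiag,
    Finset.sum_union (Finset.disjoint_diag_offDiag _), Finset.sum_diag]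

lemma sum_kronecker {ι R l m n p : Type*} [NonUnitalNonAssocSemiring R] (s : Finset ι)
    (P : ι → Matrix l m R) (E : Matrix n p R) :
    (∑ i ∈ s, P i) ⊗ₖ E = ∑ i ∈ s, P i ⊗ₖ E := by
  ext
  simp [Matrix.sum_apply, Finset.sum_mul]

lemma sum_kronecker_mul_sum_kronecker {ι R m n : Type*} [Fintype ι] [CommSemiring R]
    [Fintype m] [Fintype n] (P P' : ι → Matrix m m R) {C : ι → Matrix n n R} {q : R}
    {E : Matrix n n R} (hself : ∀ i, C i * C i = q • C i)
    (hne : ∀ i j, i ≠ j → C i * C j = E) :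
    (∑ i, P i ⊗ₖ C i) * ∑ i, P' i ⊗ₖ C i =
      q • ∑ i, (P i * P' i) ⊗ₖ C i +
        (∑ p ∈ (Finset.univ : Finset ι).offDiag, P p.1 * P' p.2) ⊗ₖ E := by
  rw [sum_mul_sum_eq_sum_mul_add_sum_offDiag, sum_kronecker, Finset.smul_sum]
  congr 1
  · refine Finset.sum_congr rfl fun i _ => ?_
    rw [← Matrix.mul_kronecker_mul, hself, Matrix.kronecker_smul]
  · refine Finset.sum_congr rfl fun p hp => ?_
    rw [← Matrix.mul_kronecker_mul, hne _ _ (Finset.mem_offDiag.mp hp).2.2]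

section Translations

variable {K : Type*} [Field K] [DecidableEq K] {β β' : K}

lemma permP_eq_permMatrix (hβ : β ≠ 0) (γ : K) :
    permP β γ = (Equiv.addRight (γ / β)).permMatrix ℝ := by
  ext a b
  have hiff : β * (-a + b) = γ ↔ a + γ / β = b := by
    rw [mul_comm, ← eq_div_iff hβ, neg_add_eq_iff_eq_add, eq_comm]
  simp [permP, Equiv.toPEquiv_apply, PEquiv.toMatrix_apply, hiff]

variable [Fintype K]

lemma permP_mul_permP (hβ : β ≠ 0) (hβ' : β' ≠ 0) (hs : β + β' ≠ 0) (γ : K) :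
    permP β γ * permP β' γ = permP (β * β' / (β + β')) γ := by
  have htranslation : γ / β + γ / β' = γ / (β * β' / (β + β')) := by
    field_simp
    ring
  rw [permP_eq_permMatrix hβ, permP_eq_permMatrix hβ',
    permP_eq_permMatrix (div_ne_zero (mul_ne_zero hβ hβ') hs), ← Matrix.permMatrix_mul,
    ← htranslation, Equiv.addRight_add]

lemma sum_permP (hβ : β ≠ 0) :
    ∑ γ : {x : K // x ≠ 0}, permP β (γ : K) = allOnes K - 1 := by
  have hzero : permP β 0 = 1 := by
    rw [permP_eq_permMatrix hβ, zero_div, Equiv.addRight_zero, Matrix.permMatrix_one]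
  have htotal : ∑ γ : K, permP β γ = allOnes K := by
    ext a b
    simp [Matrix.sum_apply, permP, allOnes]
  rw [eq_sub_iff_add_eq', ← hzero, ← htotal, Fintype.sum_eq_add_sum_subtype_ne _ (0 : K)]

lemma sum_offDiag_permP_mul_permP (hβ : β ≠ 0) (hβ' : β' ≠ 0) (hs : β + β' ≠ 0) :
    ∑ p ∈ (Finset.univ : Finset {x : K // x ≠ 0}).offDiag,
        permP β (p.1 : K) * permP β' (p.2 : K) =
      (2 : ℝ) • 1 + ((Fintype.card K : ℝ) - 3) • allOnes K := by
  have hsplit := sum_mul_sum_eq_sum_mul_add_sum_offDiag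
    (fun γ : {x : K // x ≠ 0} => permP β (γ : K)) fun γ => permP β' (γ : K)
  simp only [permP_mul_permP hβ hβ' hs] at hsplit
  rw [sum_permP hβ, sum_permP hβ', sum_permP (div_ne_zero (mul_ne_zero hβ hβ') hs)] at hsplit
  rw [← sub_eq_iff_eq_add'.mpr hsplit, sub_mul, mul_sub, allOnes_mul_allOnes, mul_one, one_mul]
  module

end Translations

theorem NN_mul_general {K n : Type*} [Field K] [Fintype K] [DecidableEq K] [Fintype n]
    {C : {x : K // x ≠ 0} → Matrix n n ℝ} {q : ℝ} (hself : ∀ γ, C γ * C γ = q • C γ)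
    (hne : ∀ γ δ, γ ≠ δ → C γ * C δ = allOnes n) {β β' : K} (hβ : β ≠ 0) (hβ' : β' ≠ 0)
    (hs : β + β' ≠ 0) :
    (∑ γ : {x : K // x ≠ 0}, permP β (γ : K) ⊗ₖ C γ) *
        ∑ γ : {x : K // x ≠ 0}, permP β' (γ : K) ⊗ₖ C γ =
      q • ∑ γ : {x : K // x ≠ 0}, permP (β * β' / (β + β')) (γ : K) ⊗ₖ C γ +
        (2 : ℝ) • ((1 : Matrix K K ℝ) ⊗ₖ allOnes n) +
        ((Fintype.card K : ℝ) - 3) • allOnes (K × n) := by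
  rw [sum_kronecker_mul_sum_kronecker _ _ hself hne, sum_offDiag_permP_mul_permP hβ hβ' hs,
    Matrix.add_kronecker, Matrix.smul_kronecker, Matrix.smul_kronecker, allOnes_kronecker_allOnes,
    add_assoc]
  simp only [permP_mul_permP hβ hβ' hs]

/-- In the twin prime power construction, for nonzero `β, β'` with `β + β' ≠ 0`,
`N_β · N_{β'} = q·N_{ββ'/(β+β')} + 2·(I_{q+2} ⊗ J_{q²}) + (q−1)·J`. -/
theorem NN_mul {F K : Type*} [Field F] [Fintype F] [DecidableEq F]
    [Field K] [Fintype K] [DecidableEq K]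
    (hcard : Fintype.card K = Fintype.card F + 2)
    (ψ : {x : K // x ≠ 0} ≃ Option F) (β β' : K) (hβ : β ≠ 0) (hβ' : β' ≠ 0)
    (hs : β + β' ≠ 0) :
    NN ψ β * NN ψ β' =
      (Fintype.card F : ℝ) • NN ψ (β * β' / (β + β')) +
        (2 : ℝ) • ((1 : Matrix K K ℝ) ⊗ₖ allOnes (F × F)) +
        ((Fintype.card F : ℝ) - 1) • allOnes (K × (F × F)) := by
  have hcard' : (Fintype.card F : ℝ) - 1 = (Fintype.card K : ℝ) - 3 := by
    rw [hcard]
    push_cast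
    ring
  rw [hcard']
  exact NN_mul_general (fun γ => auxC_mul_self (ψ γ))
    (fun _ _ h => auxC_mul_auxC_of_ne (ψ.injective.ne h)) hβ hβ' hs
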